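/- Let μ be twice continuously differentiable on [0,1] with μ(α) = α^ν μ₁(α), where ν ≥ 0, μ₁ is continuous and μ₁(α) ≥ ρ for all α ∈ [0,1] for some ρ > 0. Let Z be the fundamental solution of the one-dimensional ultraslow diffusion equation, characterized by its Laplace transform in t. Then for every T > 0 there exists a constant ρ₀ > 0 such that Z(t,0) ≥ ρ₀ for all 0 < t ≤ T. -/

import Mathlib

open MeasureTheory Filter Set

/-- `K(p) = ∫₀¹ p^{α-1} μ(α) dα` for real `p > 0`. -/
noncomputable def Kreal (μ : ℝ → ℝ) (p : ℝ) : ℝ :=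
  ∫ α in (0:ℝ)..1, p ^ (α - 1) * μ α

/-! The Laplace transform `L` of `z = Z(·, 0)` satisfies `p * L p = 1 / 2 * √(p * K p)`. Since
`p * K p = ∫ p ^ α * μ α` is a Bernstein function, so is its square root. Hence `p * L p` has a
completely monotone derivative, which says exactly that the Post–Widder approximations of `z` are
antitone; so `z` is antitone, and it remains to see that `z T > 0`. If `z T ≤ 0`, then `z ≤ 0`
beyond `T` and `L` stays bounded above near `0`, whereas `K p ≥ ∫ μ > 0` for `p ≤ 1` forces
`L p = 1 / 2 * √(K p / p) → ∞`. -/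

open scoped Topology ContDiff Nat

section CompleteMonotonicity

/-- Completely monotone functions on `s`, the sign-alternating analogue of Mathlib's
`AbsolutelyMonotoneOn`. Derivatives are taken within `s`, which is meant to satisfy
`UniqueDiffOn ℝ s`. -/
structure CompletelyMonotoneOn (f : ℝ → ℝ) (s : Set ℝ) : Prop where
  contDiffOn : ContDiffOn ℝ ∞ f s
  nonneg : ∀ (n : ℕ), ∀ x ∈ s, 0 ≤ (-1) ^ n * iteratedDerivWithin n f s x

/-- Bernstein functions on `s`: nonnegative functions with a completely monotone derivative. -/
structure IsBernsteinOn (f : ℝ → ℝ) (s : Set ℝ) : Prop where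
  nonneg : ∀ x ∈ s, 0 ≤ f x
  differentiableOn : DifferentiableOn ℝ f s
  completelyMonotoneOn_derivWithin : CompletelyMonotoneOn (derivWithin f s) s

variable {f g : ℝ → ℝ} {s : Set ℝ} {x c r : ℝ} {n : ℕ} {D : ℕ → ℝ → ℝ}

theorem iteratedDerivWithin_of_hasDerivWithinAt_neg_succ (hs : UniqueDiffOn ℝ s)
    (hD : ∀ n, ∀ x ∈ s, HasDerivWithinAt (D n) (-D (n + 1) x) s x) (n : ℕ) :
    EqOn (iteratedDerivWithin n (D 0) s) (fun x ↦ (-1) ^ n * D n x) s := by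
  induction n with
  | zero => intro x _; simp
  | succ n ih =>
    intro x hx
    rw [iteratedDerivWithin_succ, derivWithin_congr ih (ih hx),
      ((hD n x hx).const_mul _).derivWithin (hs x hx)]
    ring

theorem nonneg_iteratedDerivWithin_mul_of_alternating (hs : UniqueDiffOn ℝ s) (hx : x ∈ s)
    (hf : ContDiffWithinAt ℝ n f s x) (hg : ContDiffWithinAt ℝ n g s x)
    (hf_sign : ∀ k ≤ n, 0 ≤ (-1) ^ k * iteratedDerivWithin k f s x)
    (hg_sign : ∀ k ≤ n, 0 ≤ (-1) ^ k * iteratedDerivWithin k g s x) :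
    0 ≤ (-1) ^ n * iteratedDerivWithin n (f * g) s x := by
  rw [iteratedDerivWithin_mul hx hs hf hg, Finset.mul_sum]
  refine Finset.sum_nonneg fun k hk ↦ ?_
  have hkn : k ≤ n := Finset.mem_range_succ_iff.mp hk
  have hsplit : (-1 : ℝ) ^ n = (-1) ^ k * (-1) ^ (n - k) := by
    rw [← pow_add, Nat.add_sub_cancel' hkn]
  calc (0 : ℝ)
      ≤ n.choose k * ((-1) ^ k * iteratedDerivWithin k f s x) *
          ((-1) ^ (n - k) * iteratedDerivWithin (n - k) g s x) :=
        mul_nonneg (mul_nonneg (Nat.cast_nonneg _) (hf_sign k hkn)) (hg_sign _ (n.sub_le k))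
    _ = _ := by rw [hsplit]; ring

namespace CompletelyMonotoneOn

theorem nonneg_of_hasDerivWithinAt_neg_succ (hf : CompletelyMonotoneOn (D 0) s)
    (hs : UniqueDiffOn ℝ s) (hD : ∀ n, ∀ x ∈ s, HasDerivWithinAt (D n) (-D (n + 1) x) s x)
    (n : ℕ) (hx : x ∈ s) : 0 ≤ D n x := by
  have h := hf.nonneg n x hx
  rw [iteratedDerivWithin_of_hasDerivWithinAt_neg_succ hs hD n hx, ← mul_assoc, ← mul_pow] at h
  simpa using h

theorem congr (hf : CompletelyMonotoneOn f s) (hfg : EqOn g f s) : CompletelyMonotoneOn g s where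
  contDiffOn := hf.contDiffOn.congr hfg
  nonneg n x hx := by
    rw [iteratedDerivWithin_congr hfg hx]
    exact hf.nonneg n x hx

theorem const_mul (hf : CompletelyMonotoneOn f s) (hc : 0 ≤ c) :
    CompletelyMonotoneOn (fun x ↦ c * f x) s where
  contDiffOn := contDiffOn_const.mul hf.contDiffOn
  nonneg n x hx := by
    rw [iteratedDerivWithin_const_mul_field, mul_left_comm]
    exact mul_nonneg hc (hf.nonneg n x hx)

theorem mul (hs : UniqueDiffOn ℝ s) (hf : CompletelyMonotoneOn f s)
    (hg : CompletelyMonotoneOn g s) : CompletelyMonotoneOn (f * g) s where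
  contDiffOn := hf.contDiffOn.mul hg.contDiffOn
  nonneg _ x hx := nonneg_iteratedDerivWithin_mul_of_alternating hs hx
    ((hf.contDiffOn x hx).of_le (mod_cast le_top)) ((hg.contDiffOn x hx).of_le (mod_cast le_top))
    (fun k _ ↦ hf.nonneg k x hx) (fun k _ ↦ hg.nonneg k x hx)

end CompletelyMonotoneOn

namespace IsBernsteinOn

theorem contDiffOn (hs : UniqueDiffOn ℝ s) (hf : IsBernsteinOn f s) : ContDiffOn ℝ ∞ f s :=
  (contDiffOn_infty_iff_derivWithin hs).mpr
    ⟨hf.differentiableOn, hf.completelyMonotoneOn_derivWithin.contDiffOn⟩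

theorem of_hasDerivWithinAt (hs : UniqueDiffOn ℝ s) (hf : ∀ x ∈ s, 0 ≤ f x)
    (hderiv : ∀ x ∈ s, HasDerivWithinAt f (g x) s x) (hg : CompletelyMonotoneOn g s) :
    IsBernsteinOn f s where
  nonneg := hf
  differentiableOn x hx := (hderiv x hx).differentiableWithinAt
  completelyMonotoneOn_derivWithin :=
    hg.congr fun x hx ↦ (hderiv x hx).derivWithin (hs x hx)

theorem congr (hf : IsBernsteinOn f s) (hfg : EqOn g f s) : IsBernsteinOn g s where
  nonneg x hx := (hf.nonneg x hx).trans_eq (hfg hx).symm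
  differentiableOn := hf.differentiableOn.congr hfg
  completelyMonotoneOn_derivWithin :=
    hf.completelyMonotoneOn_derivWithin.congr fun _ hx ↦ derivWithin_congr hfg (hfg hx)

theorem const_mul (hf : IsBernsteinOn f s) (hc : 0 ≤ c) :
    IsBernsteinOn (fun x ↦ c * f x) s where
  nonneg x hx := mul_nonneg hc (hf.nonneg x hx)
  differentiableOn := hf.differentiableOn.const_mul c
  completelyMonotoneOn_derivWithin :=
    (hf.completelyMonotoneOn_derivWithin.const_mul hc).congr fun _ _ ↦ derivWithin_const_mul_field c

theorem hasDerivWithinAt_rpow (hf : IsBernsteinOn f s) (hpos : ∀ x ∈ s, 0 < f x) (r : ℝ)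
    (hx : x ∈ s) :
    HasDerivWithinAt (fun x ↦ f x ^ r) (r * (derivWithin f s x * f x ^ (r - 1))) s x :=
  ((hf.differentiableOn x hx).hasDerivWithinAt.rpow_const (Or.inl (hpos x hx).ne')).congr_deriv
    (by ring)

/- Since `(f ^ (-r))' = -r * f' * f ^ (-(r + 1))`, the sign of the derivative of order `n + 1`
is given by Leibniz' rule and the signs up to order `n`, for the exponent `r + 1`. -/
theorem rpow_neg (hs : UniqueDiffOn ℝ s) (hf : IsBernsteinOn f s) (hpos : ∀ x ∈ s, 0 < f x)
    (hr : 0 ≤ r) : CompletelyMonotoneOn (fun x ↦ f x ^ (-r)) s := by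
  have hsmooth (q : ℝ) : ContDiffOn ℝ ∞ (fun x ↦ f x ^ q) s :=
    (hf.contDiffOn hs).rpow_const_of_ne fun x hx ↦ (hpos x hx).ne'
  refine ⟨hsmooth _, fun n ↦ ?_⟩
  induction n using Nat.strong_induction_on generalizing r with
  | _ n ih =>
    intro x hx
    rcases n with _ | n
    · simpa using Real.rpow_nonneg (hpos x hx).le (-r)
    have hderiv : EqOn (derivWithin (fun x ↦ f x ^ (-r)) s)
        (fun x ↦ -r * (derivWithin f s * fun x ↦ f x ^ (-(r + 1))) x) s := fun y hy ↦ by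
      rw [(hf.hasDerivWithinAt_rpow hpos (-r) hy).derivWithin (hs y hy)]
      simp only [Pi.mul_apply, neg_add']
    have hleibniz := nonneg_iteratedDerivWithin_mul_of_alternating (n := n) hs hx
      ((hf.completelyMonotoneOn_derivWithin.contDiffOn x hx).of_le (mod_cast le_top))
      ((hsmooth (-(r + 1)) x hx).of_le (mod_cast le_top))
      (fun k _ ↦ hf.completelyMonotoneOn_derivWithin.nonneg k x hx)
      (fun k hk ↦ ih k (Nat.lt_succ_of_le hk) (by positivity) x hx)
    rw [iteratedDerivWithin_succ', iteratedDerivWithin_congr hderiv hx,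
      iteratedDerivWithin_const_mul_field]
    exact (mul_nonneg hr hleibniz).trans_eq (by ring)

theorem rpow (hs : UniqueDiffOn ℝ s) (hf : IsBernsteinOn f s) (hpos : ∀ x ∈ s, 0 < f x)
    (hr₀ : 0 ≤ r) (hr₁ : r ≤ 1) : IsBernsteinOn (fun x ↦ f x ^ r) s :=
  of_hasDerivWithinAt hs (fun x hx ↦ Real.rpow_nonneg (hpos x hx).le r)
    (fun _ hx ↦ (neg_sub 1 r ▸ hf.hasDerivWithinAt_rpow hpos r hx :))
    ((hf.completelyMonotoneOn_derivWithin.mul hs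
      (hf.rpow_neg hs hpos (sub_nonneg.mpr hr₁))).const_mul hr₀)

end IsBernsteinOn

end CompleteMonotonicity

section IntegralRpow

variable {X : Type*} [MeasurableSpace X] {m : Measure X} {e w : X → ℝ} {p : ℝ}

theorem memLp_top_const_rpow (he : MemLp e ⊤ m) (hp : 0 < p) : MemLp (fun x ↦ p ^ e x) ⊤ m := by
  refine memLp_top_of_bound
    ((Real.continuous_const_rpow hp.ne').comp_aestronglyMeasurable he.aestronglyMeasurable)
    (Real.exp (|Real.log p| * lpNorm e ⊤ m)) ?_
  filter_upwards [ae_le_lpNorm_exponent_top he] with x hx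
  rw [Real.norm_of_nonneg (Real.rpow_nonneg hp.le _), Real.rpow_def_of_pos hp]
  calc Real.exp (Real.log p * e x)
      ≤ Real.exp (|Real.log p| * ‖e x‖) :=
        Real.exp_le_exp.mpr ((le_abs_self _).trans_eq (abs_mul _ _))
    _ ≤ Real.exp (|Real.log p| * lpNorm e ⊤ m) := by gcongr

theorem integrable_rpow_mul (he : MemLp e ⊤ m) (hw : Integrable w m) (hp : 0 < p) :
    Integrable (fun x ↦ p ^ e x * w x) m :=
  hw.mul_of_top_right (memLp_top_const_rpow he hp)

theorem rpow_le_rpow_add_rpow {a b q r : ℝ} (ha : 0 < a) (haq : a ≤ q) (hqb : q ≤ b) :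
    q ^ r ≤ a ^ r + b ^ r := by
  have hq := ha.trans_le haq
  rcases le_total 0 r with hr | hr
  · exact le_add_of_nonneg_of_le (Real.rpow_nonneg ha.le r) (Real.rpow_le_rpow hq.le hqb hr)
  · exact le_add_of_le_of_nonneg (Real.rpow_le_rpow_of_nonpos ha haq hr)
      (Real.rpow_nonneg (hq.le.trans hqb) r)

theorem hasDerivAt_integral_rpow_mul (he : MemLp e ⊤ m) (hw : Integrable w m) (hp : 0 < p) :
    HasDerivAt (fun p ↦ ∫ x, p ^ e x * w x ∂m) (∫ x, p ^ (e x - 1) * (e x * w x) ∂m) p := by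
  have he' : MemLp (fun x ↦ e x - 1) ⊤ m := he.sub (memLp_top_const 1)
  have hw' : Integrable (fun x ↦ e x * w x) m := hw.mul_of_top_right he
  have hp₂ : 0 < p / 2 := half_pos hp
  refine (hasDerivAt_integral_of_dominated_loc_of_deriv_le (s := Ioo (p / 2) (2 * p))
    (F' := fun p x ↦ p ^ (e x - 1) * (e x * w x))
    (bound := fun x ↦ ((p / 2) ^ (e x - 1) + (2 * p) ^ (e x - 1)) * ‖e x * w x‖)
    (Ioo_mem_nhds (by linarith) (by linarith)) ?_ (integrable_rpow_mul he hw hp)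
    (integrable_rpow_mul he' hw' hp).aestronglyMeasurable ?_ ?_ ?_).2
  · filter_upwards [eventually_gt_nhds hp] with q hq
    exact (integrable_rpow_mul he hw hq).aestronglyMeasurable
  · refine .of_forall fun x q hq ↦ ?_
    rw [norm_mul, Real.norm_of_nonneg (Real.rpow_nonneg (hp₂.trans hq.1).le _)]
    gcongr
    exact rpow_le_rpow_add_rpow hp₂ hq.1.le hq.2.le
  · simp only [add_mul]
    exact (integrable_rpow_mul he' hw'.norm hp₂).add
      (integrable_rpow_mul he' hw'.norm (mul_pos two_pos hp))
  · refine .of_forall fun x q hq ↦ ?_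
    exact ((Real.hasDerivAt_rpow_const (Or.inl (hp₂.trans hq.1).ne')).mul_const (w x)).congr_deriv
      (by ring)

theorem contDiffOn_integral_rpow_mul (he : MemLp e ⊤ m) (hw : Integrable w m) :
    ContDiffOn ℝ ∞ (fun p ↦ ∫ x, p ^ e x * w x ∂m) (Ioi 0) := by
  refine contDiffOn_infty.mpr fun n ↦ ?_
  induction n generalizing e w with
  | zero => exact contDiffOn_zero.mpr fun p hp ↦
      (hasDerivAt_integral_rpow_mul he hw hp).continuousAt.continuousWithinAt
  | succ n ih =>
    rw [Nat.cast_succ, contDiffOn_succ_iff_deriv_of_isOpen isOpen_Ioi]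
    refine ⟨fun p hp ↦
      (hasDerivAt_integral_rpow_mul he hw hp).differentiableAt.differentiableWithinAt, by simp, ?_⟩
    exact (ih (he.sub (memLp_top_const 1)) (hw.mul_of_top_right he)).congr fun p hp ↦
      (hasDerivAt_integral_rpow_mul he hw hp).deriv

theorem completelyMonotoneOn_integral_rpow_mul (he : MemLp e ⊤ m) (hw : Integrable w m)
    (he₀ : ∀ᵐ x ∂m, e x ≤ 0) (hw₀ : ∀ᵐ x ∂m, 0 ≤ w x) :
    CompletelyMonotoneOn (fun p ↦ ∫ x, p ^ e x * w x ∂m) (Ioi 0) := by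
  refine ⟨contDiffOn_integral_rpow_mul he hw, fun n ↦ ?_⟩
  induction n generalizing e w with
  | zero =>
    intro p (hp : 0 < p)
    simpa using integral_nonneg_of_ae
      (hw₀.mono fun x hx ↦ mul_nonneg (Real.rpow_nonneg hp.le (e x)) hx)
  | succ n ih =>
    intro p hp
    have hderiv : EqOn (derivWithin (fun p ↦ ∫ x, p ^ e x * w x ∂m) (Ioi 0))
        (fun p ↦ -∫ x, p ^ (e x - 1) * (-e x * w x) ∂m) (Ioi 0) := fun q hq ↦ by
      rw [(hasDerivAt_integral_rpow_mul he hw hq).hasDerivWithinAt.derivWithin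
        (uniqueDiffOn_Ioi 0 q hq)]
      simp only [neg_mul, mul_neg, integral_neg, neg_neg]
    rw [iteratedDerivWithin_succ', iteratedDerivWithin_congr hderiv hp,
      iteratedDerivWithin_fun_neg, pow_succ, mul_neg_one, neg_mul_neg]
    refine ih (he.sub (memLp_top_const 1)) (hw.mul_of_top_right he.neg) ?_ ?_ p hp
    · filter_upwards [he₀] with x hx using (sub_le_self (e x) zero_le_one).trans hx
    · filter_upwards [he₀, hw₀] with x hex hwx using mul_nonneg (neg_nonneg.mpr hex) hwx

theorem isBernsteinOn_integral_rpow_mul (he : MemLp e ⊤ m) (hw : Integrable w m)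
    (he₀ : ∀ᵐ x ∂m, 0 ≤ e x) (he₁ : ∀ᵐ x ∂m, e x ≤ 1) (hw₀ : ∀ᵐ x ∂m, 0 ≤ w x) :
    IsBernsteinOn (fun p ↦ ∫ x, p ^ e x * w x ∂m) (Ioi 0) := by
  refine .of_hasDerivWithinAt (uniqueDiffOn_Ioi 0) (fun p (hp : 0 < p) ↦ ?_)
    (fun p hp ↦ (hasDerivAt_integral_rpow_mul he hw hp).hasDerivWithinAt)
    (completelyMonotoneOn_integral_rpow_mul (he.sub (memLp_top_const 1))
      (hw.mul_of_top_right he) ?_ ?_)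
  · exact integral_nonneg_of_ae (hw₀.mono fun x hx ↦ mul_nonneg (Real.rpow_nonneg hp.le (e x)) hx)
  · filter_upwards [he₁] with x hx using sub_nonpos.mpr hx
  · filter_upwards [he₀, hw₀] with x hex hwx using mul_nonneg hex hwx

theorem integral_rpow_mul_pos (he : MemLp e ⊤ m) (hw : Integrable w m)
    (hw₀ : ∀ᵐ x ∂m, 0 ≤ w x) (hw_pos : 0 < ∫ x, w x ∂m) (hp : 0 < p) :
    0 < ∫ x, p ^ e x * w x ∂m := by
  rw [integral_pos_iff_support_of_nonneg_ae hw₀ hw] at hw_pos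
  rw [integral_pos_iff_support_of_nonneg_ae (hw₀.mono fun x hx ↦
    mul_nonneg (Real.rpow_nonneg hp.le (e x)) hx) (integrable_rpow_mul he hw hp)]
  exact hw_pos.trans_le (measure_mono fun x hx ↦ mul_ne_zero (Real.rpow_pos_of_pos hp _).ne' hx)

theorem mul_integral_le_integral_rpow_mul (he : MemLp e ⊤ m) (hw : Integrable w m)
    (he₁ : ∀ᵐ x ∂m, e x ≤ 1) (hw₀ : ∀ᵐ x ∂m, 0 ≤ w x) (hp : 0 < p) (hp₁ : p ≤ 1) :
    p * ∫ x, w x ∂m ≤ ∫ x, p ^ e x * w x ∂m := by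
  rw [← integral_const_mul]
  refine integral_mono_ae (hw.const_mul p) (integrable_rpow_mul he hw hp) ?_
  filter_upwards [he₁, hw₀] with x hex hwx
  exact mul_le_mul_of_nonneg_right (Real.self_le_rpow_of_le_one hp.le hp₁ hex) hwx

end IntegralRpow

section Concentration

variable {X : Type*} [TopologicalSpace X] [TopologicalSpace.MetrizableSpace X] [MeasurableSpace X]
  [BorelSpace X] {m : Measure X} [IsLocallyFiniteMeasure m] [m.IsOpenPosMeasure]
  {c g : X → ℝ} {s t : Set X} {x₀ : X} {θ : ℝ}

theorem tendsto_inv_setIntegral_pow_mul_setIntegral_pow_succ (ht : IsCompact t)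
    (hx₀ : x₀ ∈ closure (interior t)) (hc : ContinuousOn c t)
    (hc_lt : ∀ x ∈ t, x ≠ x₀ → c x < c x₀) (hc_nonneg : ∀ x ∈ t, 0 ≤ c x) (hc₀ : 0 < c x₀) :
    Tendsto (fun n : ℕ ↦ (∫ x in t, c x ^ n ∂m)⁻¹ * ∫ x in t, c x ^ (n + 1) ∂m)
      atTop (𝓝 (c x₀)) := by
  simpa only [smul_eq_mul, ← pow_succ] using
    tendsto_setIntegral_pow_smul_of_unique_maximum_of_isCompact_of_continuousOn
      ht hc hc_lt hc_nonneg hc₀ hx₀ hc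

theorem tendsto_pow_div_setIntegral_pow (ht : IsCompact t) (hx₀ : x₀ ∈ closure (interior t))
    (hc : ContinuousOn c t) (hc_lt : ∀ x ∈ t, x ≠ x₀ → c x < c x₀) (hc_nonneg : ∀ x ∈ t, 0 ≤ c x)
    (hθ : 0 < θ) (hθ_lt : θ < c x₀) :
    Tendsto (fun n : ℕ ↦ θ ^ n / ∫ x in t, c x ^ n ∂m) atTop (𝓝 0) := by
  have hc₀ : 0 < c x₀ := hθ.trans hθ_lt
  have hratio := tendsto_inv_setIntegral_pow_mul_setIntegral_pow_succ (m := m)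
    ht hx₀ hc hc_lt hc_nonneg hc₀
  refine (summable_of_ratio_test_tendsto_lt_one ((div_lt_one hc₀).mpr hθ_lt) ?_ ?_
    ).tendsto_atTop_zero
  · filter_upwards [hratio.eventually_ne hc₀.ne'] with n hn
    exact div_ne_zero (pow_pos hθ n).ne' (inv_eq_zero.not.mp (left_ne_zero_of_mul hn))
  · have hlim := (hratio.inv₀ hc₀.ne').const_mul θ
    rw [← div_eq_mul_inv] at hlim
    refine (abs_of_pos (div_pos hθ hc₀) ▸ hlim.abs).congr fun n ↦ ?_
    rw [← norm_div, Real.norm_eq_abs, pow_succ]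
    have := pow_pos hθ n
    congr 1
    field_simp

theorem tendsto_setIntegral_pow_mul_of_unique_maximum (hs : MeasurableSet s) (ht : IsCompact t)
    (hts : t ⊆ s) (hx₀ : t ∈ 𝓝 x₀) (hc : ContinuousOn c s) (hc_nonneg : ∀ x ∈ s, 0 ≤ c x)
    (hc₀ : 0 < c x₀) (hc_le : ∀ u ∈ 𝓝 x₀, ∃ θ < c x₀, ∀ x ∈ s \ u, c x ≤ θ)
    (hg : IntegrableOn g s m) (hgc : ContinuousWithinAt g s x₀) :
    Tendsto (fun n : ℕ ↦ (∫ x in t, c x ^ n ∂m)⁻¹ * ∫ x in s, c x ^ n * g x ∂m)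
      atTop (𝓝 (g x₀)) := by
  have hx₀_mem : x₀ ∈ closure (interior t) := subset_closure (mem_interior_iff_mem_nhds.mpr hx₀)
  have hc_lt (x) (hx : x ∈ s) (hne : x ≠ x₀) : c x < c x₀ := by
    obtain ⟨θ, hθ, hle⟩ := hc_le {x}ᶜ (isOpen_compl_singleton.mem_nhds hne.symm)
    exact (hle x ⟨hx, by simp⟩).trans_lt hθ
  have hint_nonneg (n : ℕ) : 0 ≤ ∫ x in t, c x ^ n ∂m :=
    setIntegral_nonneg ht.measurableSet fun x hx ↦ pow_nonneg (hc_nonneg x (hts hx)) n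
  have hratio := tendsto_inv_setIntegral_pow_mul_setIntegral_pow_succ (m := m)
    ht hx₀_mem (hc.mono hts) (fun x hx ↦ hc_lt x (hts hx)) (fun x hx ↦ hc_nonneg x (hts hx)) hc₀
  have hpeak : Tendsto (fun n : ℕ ↦ ∫ x in s, ((∫ x in t, c x ^ n ∂m)⁻¹ * c x ^ n) • g x ∂m)
      atTop (𝓝 (g x₀)) := by
    refine tendsto_setIntegral_peak_smul_of_integrableOn_of_tendsto hs ht.measurableSet hts
      (mem_nhdsWithin_of_mem_nhds hx₀) ht.measure_lt_top.ne
      (.of_forall fun n x hx ↦ mul_nonneg (inv_nonneg.mpr (hint_nonneg n))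
        (pow_nonneg (hc_nonneg x hx) n))
      (fun u hu hx₀u ↦ ?_) ?_ ?_ hg hgc
    · obtain ⟨θ, hθ, hle⟩ := hc_le u (hu.mem_nhds hx₀u)
      obtain ⟨θ', hθ', hθ'_lt⟩ := exists_between (max_lt hc₀ hθ)
      obtain ⟨hθ'_pos, hθθ'⟩ := max_lt_iff.mp hθ'
      have hlim := tendsto_pow_div_setIntegral_pow (m := m) ht hx₀_mem (hc.mono hts)
        (fun x hx ↦ hc_lt x (hts hx)) (fun x hx ↦ hc_nonneg x (hts hx)) hθ'_pos hθ'_lt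
      refine Metric.tendstoUniformlyOn_iff.mpr fun ε hε ↦ ?_
      filter_upwards [hlim.eventually_lt_const hε] with n hn x hx
      have hcx := hc_nonneg x hx.1
      rw [Pi.zero_apply, dist_zero_left, Real.norm_of_nonneg
        (mul_nonneg (inv_nonneg.mpr (hint_nonneg n)) (pow_nonneg hcx n)), ← div_eq_inv_mul]
      refine lt_of_le_of_lt ?_ hn
      gcongr
      exacts [hint_nonneg n, (hle x hx).trans hθθ'.le]
    · refine tendsto_const_nhds.congr' ?_
      filter_upwards [hratio.eventually_ne hc₀.ne'] with n hn
      rw [integral_const_mul, inv_mul_cancel₀ (inv_eq_zero.not.mp (left_ne_zero_of_mul hn))]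
    · exact .of_forall fun n ↦
        ((hc.pow n).aestronglyMeasurable hs).const_mul _
  simpa only [smul_eq_mul, mul_assoc, integral_const_mul] using hpeak

theorem exists_lt_forall_notMem_le_of_strictMonoOn_of_strictAntiOn {c : ℝ → ℝ} {a : ℝ}
    (hmono : StrictMonoOn c (Iic a)) (hanti : StrictAntiOn c (Ici a)) {u : Set ℝ}
    (hu : u ∈ 𝓝 a) : ∃ θ < c a, ∀ x ∉ u, c x ≤ θ := by
  obtain ⟨l, r, ⟨hl, hr⟩, hlr⟩ := mem_nhds_iff_exists_Ioo_subset.mp hu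
  refine ⟨max (c l) (c r), max_lt (hmono hl.le self_mem_Iic hl) (hanti self_mem_Ici hr.le hr),
    fun x hx ↦ ?_⟩
  rcases le_or_gt x l with hxl | hxl
  · exact le_max_of_le_left (hmono.monotoneOn (hxl.trans hl.le) hl.le hxl)
  · have hrx : r ≤ x := not_lt.mp fun hxr ↦ hx (hlr ⟨hxl, hxr⟩)
    exact le_max_of_le_right (hanti.antitoneOn hr.le (hr.le.trans hrx) hrx)

end Concentration

section Laplace

/-- Absolute convergence of the Laplace integral of `z` at every `p > 0`. -/
def LaplaceIntegrable (z : ℝ → ℝ) : Prop :=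
  ∀ p : ℝ, 0 < p → IntegrableOn (fun t : ℝ ↦ Real.exp (-p * t) * z t) (Ioi 0)

/-- The Laplace transform on the real axis; it has the junk value `0` where the integral
diverges. -/
noncomputable def laplaceTransform (z : ℝ → ℝ) (p : ℝ) : ℝ :=
  ∫ t in Ioi (0 : ℝ), Real.exp (-p * t) * z t

variable {z : ℝ → ℝ} {p a : ℝ} {n : ℕ}

theorem mul_exp_neg_mul_le_inv (hp : 0 < p) (t : ℝ) : t * Real.exp (-p * t) ≤ p⁻¹ := by
  rw [inv_eq_one_div, le_div_iff₀' hp, ← mul_assoc, neg_mul]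
  exact (Real.mul_exp_neg_le_exp_neg_one _).trans (Real.exp_le_one_iff.mpr (by norm_num))

theorem laplaceTransform_pow (n : ℕ) (hp : 0 < p) :
    laplaceTransform (fun t ↦ t ^ n) p = n ! / p ^ (n + 1) := by
  have h := Real.integral_rpow_mul_exp_neg_mul_Ioi (a := (n : ℝ) + 1) (by positivity) hp
  rw [Real.Gamma_nat_eq_factorial, add_sub_cancel_right, ← Nat.cast_succ, Real.rpow_natCast] at h
  simp only [Real.rpow_natCast] at h
  simp only [laplaceTransform, neg_mul, mul_comm (Real.exp _), h, one_div, inv_pow]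
  field_simp

theorem hasDerivAt_mul_exp_neg_div (a t : ℝ) :
    HasDerivAt (fun t ↦ t * Real.exp (-t / a)) ((1 - t / a) * Real.exp (-t / a)) t :=
  ((hasDerivAt_id t).mul ((hasDerivAt_neg t).div_const a).exp).congr_deriv
    (by simp only [id_eq]; ring)

theorem strictMonoOn_mul_exp_neg_div (ha : 0 < a) :
    StrictMonoOn (fun t ↦ t * Real.exp (-t / a)) (Iic a) := by
  refine strictMonoOn_of_deriv_pos (convex_Iic a) (by fun_prop) fun t ht ↦ ?_
  rw [interior_Iic] at ht
  rw [(hasDerivAt_mul_exp_neg_div a t).deriv]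
  exact mul_pos (sub_pos.mpr ((div_lt_one ha).mpr ht)) (Real.exp_pos _)

theorem strictAntiOn_mul_exp_neg_div (ha : 0 < a) :
    StrictAntiOn (fun t ↦ t * Real.exp (-t / a)) (Ici a) := by
  refine strictAntiOn_of_deriv_neg (convex_Ici a) (by fun_prop) fun t ht ↦ ?_
  rw [interior_Ici] at ht
  rw [(hasDerivAt_mul_exp_neg_div a t).deriv]
  exact mul_neg_of_neg_of_pos (sub_neg.mpr ((one_lt_div ha).mpr ht)) (Real.exp_pos _)

namespace LaplaceIntegrable

theorem id_mul (hz : LaplaceIntegrable z) : LaplaceIntegrable (fun t ↦ t * z t) := by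
  intro p hp
  have hbdd : ∀ᵐ t ∂volume.restrict (Ioi (0 : ℝ)), ‖t * Real.exp (-(p / 2) * t)‖ ≤ (p / 2)⁻¹ := by
    filter_upwards [ae_restrict_mem measurableSet_Ioi] with t ht
    rw [Real.norm_of_nonneg (mul_nonneg (le_of_lt ht) (Real.exp_pos _).le)]
    exact mul_exp_neg_mul_le_inv (half_pos hp) t
  refine ((hz (p / 2) (half_pos hp)).bdd_mul
    (Continuous.aestronglyMeasurable (by fun_prop)) hbdd).congr (.of_forall fun t ↦ ?_)
  have hexp : Real.exp (-p * t) = Real.exp (-(p / 2) * t) * Real.exp (-(p / 2) * t) := by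
    rw [← Real.exp_add]
    ring_nf
  simp only [hexp]
  ring

theorem pow_mul (hz : LaplaceIntegrable z) (n : ℕ) :
    LaplaceIntegrable (fun t ↦ t ^ n * z t) := by
  induction n with
  | zero => simpa only [pow_zero, one_mul] using hz
  | succ n ih => simpa only [pow_succ', mul_assoc] using ih.id_mul

theorem hasDerivAt_laplaceTransform (hz : LaplaceIntegrable z) (hp : 0 < p) :
    HasDerivAt (laplaceTransform z) (-laplaceTransform (fun t ↦ t * z t) p) p := by
  have hp₂ : 0 < p / 2 := half_pos hp
  rw [laplaceTransform, ← integral_neg]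
  refine (hasDerivAt_integral_of_dominated_loc_of_deriv_le
    (F := fun p t ↦ Real.exp (-p * t) * z t) (F' := fun p t ↦ -(Real.exp (-p * t) * (t * z t)))
    (bound := fun t ↦ ‖Real.exp (-(p / 2) * t) * (t * z t)‖)
    (Ioi_mem_nhds (half_lt_self hp)) ?_ (hz p hp) (hz.id_mul p hp).aestronglyMeasurable.neg ?_
    (hz.id_mul _ hp₂).norm ?_).2
  · filter_upwards [eventually_gt_nhds hp] with q hq
    exact (hz q hq).aestronglyMeasurable
  · filter_upwards [ae_restrict_mem measurableSet_Ioi] with t (ht : 0 < t) q (hq : p / 2 < q)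
    rw [norm_neg, norm_mul, norm_mul _ (t * z t), Real.norm_of_nonneg (Real.exp_pos _).le,
      Real.norm_of_nonneg (Real.exp_pos _).le]
    gcongr
  · refine .of_forall fun t q _ ↦ ?_
    exact ((hasDerivAt_neg q).mul_const t).exp.mul_const (z t) |>.congr_deriv (by ring)

theorem hasDerivAt_laplaceTransform_pow_mul (hz : LaplaceIntegrable z) (n : ℕ)
    (hp : 0 < p) :
    HasDerivAt (laplaceTransform fun t ↦ t ^ n * z t)
      (-laplaceTransform (fun t ↦ t ^ (n + 1) * z t) p) p := by
  simpa only [pow_succ', mul_assoc] using (hz.pow_mul n).hasDerivAt_laplaceTransform hp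

theorem one : LaplaceIntegrable (fun _ ↦ 1) := fun p hp ↦ by
  simpa only [mul_one] using integrableOn_exp_mul_Ioi (neg_lt_zero.mpr hp) 0

theorem tendsto_laplaceTransform_pow_succ_mul (hz : LaplaceIntegrable z) (ha : 0 < a)
    (hza : ContinuousAt z a) :
    Tendsto (fun n : ℕ ↦ (∫ t in Icc (a / 2) (2 * a), (t * Real.exp (-t / a)) ^ n)⁻¹ *
        laplaceTransform (fun t ↦ t ^ (n + 1) * z t) ((n + 1 : ℕ) / a))
      atTop (𝓝 (a * Real.exp (-a / a) * z a)) := by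
  have hexp (n : ℕ) (t : ℝ) : Real.exp (-((n + 1 : ℕ) / a) * t) * (t ^ (n + 1) * z t) =
      (t * Real.exp (-t / a)) ^ n * (t * Real.exp (-t / a) * z t) := by
    rw [← mul_assoc (_ ^ n), ← pow_succ, mul_pow, ← Real.exp_nat_mul]
    ring_nf
  have hint : IntegrableOn (fun t ↦ t * Real.exp (-t / a) * z t) (Ioi 0) := by
    refine (hz.id_mul a⁻¹ (inv_pos.mpr ha)).congr (.of_forall fun t ↦ ?_)
    ring_nf
  simp only [laplaceTransform, hexp]
  refine tendsto_setIntegral_pow_mul_of_unique_maximum measurableSet_Ioi isCompact_Icc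
    (fun t ht ↦ (half_pos ha).trans_le ht.1) (Icc_mem_nhds (half_lt_self ha) (by linarith))
    (by fun_prop) (fun t ht ↦ mul_nonneg (le_of_lt ht) (Real.exp_pos _).le)
    (mul_pos ha (Real.exp_pos _)) (fun u hu ↦ ?_) hint
    (ContinuousAt.continuousWithinAt (by fun_prop))
  obtain ⟨θ, hθ, hle⟩ := exists_lt_forall_notMem_le_of_strictMonoOn_of_strictAntiOn
    (strictMonoOn_mul_exp_neg_div ha) (strictAntiOn_mul_exp_neg_div ha) hu
  exact ⟨θ, hθ, fun t ht ↦ hle t ht.2⟩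

theorem tendsto_post_widder (hz : LaplaceIntegrable z) (ha : 0 < a) (hza : ContinuousAt z a) :
    Tendsto (fun n : ℕ ↦ (n / a) ^ (n + 1) / n ! * laplaceTransform (fun t ↦ t ^ n * z t) (n / a))
      atTop (𝓝 (z a)) := by
  have hpeak : 0 < a * Real.exp (-a / a) := mul_pos ha (Real.exp_pos _)
  have hone := one.tendsto_laplaceTransform_pow_succ_mul ha continuousAt_const
  simp only [mul_one] at hone
  have hdiv := (hz.tendsto_laplaceTransform_pow_succ_mul ha hza).div hone hpeak.ne'
  rw [mul_div_cancel_left₀ _ hpeak.ne'] at hdiv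
  refine (tendsto_add_atTop_iff_nat 1).mp (hdiv.congr' ?_)
  filter_upwards [hone.eventually_ne hpeak.ne'] with n hn
  rw [Pi.div_apply, mul_div_mul_left _ _ (left_ne_zero_of_mul hn),
    laplaceTransform_pow _ (by positivity), div_div_eq_mul_div, mul_comm, mul_div_right_comm]

/- Up to the sign `(-1) ^ n`, the difference of the two sides is the derivative of order `n + 1` of
`p ↦ p * laplaceTransform z p`. -/
theorem mul_laplaceTransform_pow_succ_mul_le (hz : LaplaceIntegrable z)
    (hbern : IsBernsteinOn (fun p ↦ p * laplaceTransform z p) (Ioi 0)) (n : ℕ) (hp : 0 < p) :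
    p * laplaceTransform (fun t ↦ t ^ (n + 1) * z t) p ≤
      (n + 1) * laplaceTransform (fun t ↦ t ^ n * z t) p := by
  set D : ℕ → ℝ → ℝ := fun n p ↦ (n + 1) * laplaceTransform (fun t ↦ t ^ n * z t) p -
    p * laplaceTransform (fun t ↦ t ^ (n + 1) * z t) p with hD
  have hD_deriv (n : ℕ) (p : ℝ) (hp : p ∈ Ioi 0) :
      HasDerivWithinAt (D n) (-D (n + 1) p) (Ioi 0) p := by
    refine (((hz.hasDerivAt_laplaceTransform_pow_mul n hp).const_mul (n + 1 : ℝ)).sub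
      ((hasDerivAt_id p).mul (hz.hasDerivAt_laplaceTransform_pow_mul (n + 1) hp))).congr_deriv ?_
      |>.hasDerivWithinAt
    simp only [hD, id_eq]
    push_cast
    ring
  have hD_zero : EqOn (D 0) (derivWithin (fun p ↦ p * laplaceTransform z p) (Ioi 0)) (Ioi 0) := by
    intro q hq
    have hderiv := (hasDerivAt_id q).mul (hz.hasDerivAt_laplaceTransform hq)
    refine Eq.trans ?_ (hderiv.hasDerivWithinAt.derivWithin (uniqueDiffOn_Ioi 0 q hq)).symm
    simp [hD, sub_eq_add_neg]
  exact sub_nonneg.mp <|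
    (hbern.completelyMonotoneOn_derivWithin.congr hD_zero).nonneg_of_hasDerivWithinAt_neg_succ
      (uniqueDiffOn_Ioi 0) hD_deriv n hp

theorem monotoneOn_pow_mul_laplaceTransform (hz : LaplaceIntegrable z)
    (hbern : IsBernsteinOn (fun p ↦ p * laplaceTransform z p) (Ioi 0)) (n : ℕ) :
    MonotoneOn (fun p ↦ p ^ (n + 1) / n ! * laplaceTransform (fun t ↦ t ^ n * z t) p) (Ioi 0) := by
  have hderiv (p : ℝ) (hp : p ∈ Ioi 0) :
      HasDerivAt (fun p ↦ p ^ (n + 1) / n ! * laplaceTransform (fun t ↦ t ^ n * z t) p)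
        (p ^ n / n ! * ((n + 1) * laplaceTransform (fun t ↦ t ^ n * z t) p -
          p * laplaceTransform (fun t ↦ t ^ (n + 1) * z t) p)) p := by
    refine (((hasDerivAt_pow (n + 1) p).div_const (n ! : ℝ)).mul
      (hz.hasDerivAt_laplaceTransform_pow_mul n hp)).congr_deriv ?_
    push_cast
    ring
  refine monotoneOn_of_hasDerivWithinAt_nonneg (convex_Ioi 0)
    (fun p hp ↦ (hderiv p hp).continuousAt.continuousWithinAt)
    (fun p hp ↦ (hderiv p (interior_subset hp)).hasDerivWithinAt) fun p hp ↦ ?_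
  have hp : 0 < p := interior_subset hp
  exact mul_nonneg (by positivity)
    (sub_nonneg.mpr (hz.mul_laplaceTransform_pow_succ_mul_le hbern n hp))

theorem antitoneOn_of_isBernsteinOn (hz : LaplaceIntegrable z)
    (hzc : ContinuousOn z (Ioi 0))
    (hbern : IsBernsteinOn (fun p ↦ p * laplaceTransform z p) (Ioi 0)) :
    AntitoneOn z (Ioi 0) := by
  intro a (ha : 0 < a) b (hb : 0 < b) hab
  refine le_of_tendsto_of_tendsto
    (hz.tendsto_post_widder hb (hzc.continuousAt (Ioi_mem_nhds hb)))
    (hz.tendsto_post_widder ha (hzc.continuousAt (Ioi_mem_nhds ha))) ?_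
  filter_upwards [eventually_gt_atTop 0] with n hn
  have hn : (0 : ℝ) < n := Nat.cast_pos.mpr hn
  exact hz.monotoneOn_pow_mul_laplaceTransform hbern n (div_pos hn hb) (div_pos hn ha)
    (div_le_div_of_nonneg_left hn.le ha hab)

theorem laplaceTransform_le_of_nonpos_Ioi {T : ℝ} (hz : LaplaceIntegrable z)
    (hT : 0 ≤ T) (hzT : ∀ t > T, z t ≤ 0) (hp : 0 < p) :
    laplaceTransform z p ≤ ∫ t in Ioc 0 T, Real.exp T * ‖Real.exp (-1 * t) * z t‖ := by
  have hint {q : ℝ} (hq : 0 < q) : IntegrableOn (fun t ↦ Real.exp (-q * t) * z t) (Ioc 0 T) :=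
    (hz q hq).mono_set Ioc_subset_Ioi_self
  have htail : ∫ t in Ioi T, Real.exp (-p * t) * z t ≤ 0 :=
    setIntegral_nonpos measurableSet_Ioi fun t ht ↦
      mul_nonpos_of_nonneg_of_nonpos (Real.exp_pos _).le (hzT t ht)
  have hhead : ∫ t in Ioc 0 T, Real.exp (-p * t) * z t ≤
      ∫ t in Ioc 0 T, Real.exp T * ‖Real.exp (-1 * t) * z t‖ := by
    refine setIntegral_mono_on (hint hp) ((hint one_pos).norm.const_mul _) measurableSet_Ioc
      fun t ht ↦ (le_abs_self _).trans ?_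
    rw [← Real.norm_eq_abs, norm_mul, norm_mul, Real.norm_of_nonneg (Real.exp_pos _).le,
      Real.norm_of_nonneg (Real.exp_pos _).le, ← mul_assoc, ← Real.exp_add]
    gcongr
    calc -p * t ≤ 0 := mul_nonpos_of_nonpos_of_nonneg (neg_nonpos.mpr hp.le) ht.1.le
      _ ≤ T + -1 * t := by linarith [ht.2]
  rw [laplaceTransform, ← Ioc_union_Ioi_eq_Ioi hT, setIntegral_union Ioc_disjoint_Ioi_same
    measurableSet_Ioi (hint hp) ((hz p hp).mono_set (Ioi_subset_Ioi hT))]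
  linarith

theorem pos_of_antitoneOn_of_tendsto_atTop (hz : LaplaceIntegrable z)
    (hanti : AntitoneOn z (Ioi 0)) (hlim : Tendsto (laplaceTransform z) (𝓝[>] 0) atTop)
    (ha : 0 < a) : 0 < z a := by
  by_contra! hza
  obtain ⟨p, hlarge, hp⟩ := ((hlim.eventually_gt_atTop
    (∫ t in Ioc 0 a, Real.exp a * ‖Real.exp (-1 * t) * z t‖)).and
      self_mem_nhdsWithin).exists
  exact hlarge.not_ge (hz.laplaceTransform_le_of_nonpos_Ioi ha.le
    (fun t ht ↦ (hanti ha (ha.trans ht) ht.le).trans hza) hp)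

end LaplaceIntegrable

end Laplace

section Kernel

variable {μ : ℝ → ℝ} {p : ℝ}

theorem memLp_top_id_restrict_Ioc (a b : ℝ) : MemLp (fun x : ℝ ↦ x) ⊤ (volume.restrict (Ioc a b)) :=
  memLp_top_of_bound aestronglyMeasurable_id (max |a| |b|) <| by
    filter_upwards [ae_restrict_mem measurableSet_Ioc] with x hx
    exact abs_le_max_abs_abs hx.1.le hx.2

theorem mul_Kreal (μ : ℝ → ℝ) (hp : 0 < p) : p * Kreal μ p = ∫ α in Ioc 0 1, p ^ α * μ α := by
  rw [Kreal, intervalIntegral.integral_of_le zero_le_one, ← integral_const_mul]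
  simp only [Real.rpow_sub_one hp.ne', ← mul_assoc, mul_div_cancel₀ _ hp.ne']

theorem isBernsteinOn_mul_Kreal (hμ : IntegrableOn μ (Ioc 0 1)) (hμ₀ : ∀ α ∈ Ioc 0 1, 0 ≤ μ α) :
    IsBernsteinOn (fun p ↦ p * Kreal μ p) (Ioi 0) := by
  refine (isBernsteinOn_integral_rpow_mul (memLp_top_id_restrict_Ioc 0 1) hμ ?_ ?_ ?_).congr
    fun p hp ↦ mul_Kreal μ hp
  all_goals filter_upwards [ae_restrict_mem measurableSet_Ioc] with α hα
  exacts [hα.1.le, hα.2, hμ₀ α hα]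

theorem mul_Kreal_pos (hμ : IntegrableOn μ (Ioc 0 1)) (hμ₀ : ∀ α ∈ Ioc 0 1, 0 ≤ μ α)
    (hμ_pos : 0 < ∫ α in Ioc 0 1, μ α) (hp : 0 < p) : 0 < p * Kreal μ p := by
  rw [mul_Kreal μ hp]
  exact integral_rpow_mul_pos (memLp_top_id_restrict_Ioc 0 1) hμ
    (ae_restrict_of_forall_mem measurableSet_Ioc hμ₀) hμ_pos hp

theorem integral_le_Kreal (hμ : IntegrableOn μ (Ioc 0 1)) (hμ₀ : ∀ α ∈ Ioc 0 1, 0 ≤ μ α)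
    (hp : 0 < p) (hp₁ : p ≤ 1) : ∫ α in Ioc 0 1, μ α ≤ Kreal μ p := by
  refine le_of_mul_le_mul_left ?_ hp
  rw [mul_Kreal μ hp]
  exact mul_integral_le_integral_rpow_mul (memLp_top_id_restrict_Ioc 0 1) hμ
    (ae_restrict_of_forall_mem measurableSet_Ioc fun α hα ↦ hα.2)
    (ae_restrict_of_forall_mem measurableSet_Ioc hμ₀) hp hp₁

theorem tendsto_Kreal_div_sqrt_atTop (hμ : IntegrableOn μ (Ioc 0 1))
    (hμ₀ : ∀ α ∈ Ioc 0 1, 0 ≤ μ α) (hμ_pos : 0 < ∫ α in Ioc 0 1, μ α) :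
    Tendsto (fun p ↦ 1 / 2 * Kreal μ p / √(p * Kreal μ p)) (𝓝[>] 0) atTop := by
  have hlim : Tendsto (fun p : ℝ ↦ 1 / 2 * √((∫ α in Ioc 0 1, μ α) * p⁻¹)) (𝓝[>] 0) atTop :=
    (Real.tendsto_sqrt_atTop.comp
      (tendsto_inv_nhdsGT_zero.const_mul_atTop hμ_pos)).const_mul_atTop one_half_pos
  refine tendsto_atTop_mono' _ ?_ hlim
  filter_upwards [Ioc_mem_nhdsGT one_pos] with p ⟨hp, hp₁⟩
  have hK := integral_le_Kreal hμ hμ₀ hp hp₁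
  have hK_pos := hμ_pos.trans_le hK
  calc 1 / 2 * √((∫ α in Ioc 0 1, μ α) * p⁻¹)
      ≤ 1 / 2 * √(Kreal μ p * p⁻¹) := by gcongr
    _ = 1 / 2 * Kreal μ p / √(p * Kreal μ p) := by
      rw [mul_div_assoc, ← div_eq_mul_inv, Real.sqrt_div hK_pos.le, Real.sqrt_mul hp.le]
      nth_rewrite 2 [← Real.mul_self_sqrt hK_pos.le]
      field_simp

theorem mul_half_mul_div_sqrt_mul (p k : ℝ) :
    p * (1 / 2 * k / √(p * k)) = 1 / 2 * (p * k) ^ (1 / 2 : ℝ) := by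
  rw [← Real.sqrt_eq_rpow]
  calc p * (1 / 2 * k / √(p * k))
      = 1 / 2 * (p * k / √(p * k)) := by ring
    _ = 1 / 2 * √(p * k) := by rw [Real.div_sqrt]

theorem fundamental_solution_lower_bound_at_zero_general {z : ℝ → ℝ}
    (hμ : IntegrableOn μ (Ioc 0 1)) (hμ₀ : ∀ α ∈ Ioc 0 1, 0 ≤ μ α)
    (hμ_pos : 0 < ∫ α in Ioc 0 1, μ α) (hzc : ContinuousOn z (Ioi 0)) (hz : LaplaceIntegrable z)
    (hlap : ∀ p > 0, laplaceTransform z p = 1 / 2 * Kreal μ p / √(p * Kreal μ p)) :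
    ∀ T > 0, ∃ ρ₀ > 0, ∀ t : ℝ, 0 < t → t ≤ T → ρ₀ ≤ z t := by
  have hbern : IsBernsteinOn (fun p ↦ p * laplaceTransform z p) (Ioi 0) :=
    (((isBernsteinOn_mul_Kreal hμ hμ₀).rpow (uniqueDiffOn_Ioi 0)
      (fun p hp ↦ mul_Kreal_pos hμ hμ₀ hμ_pos hp) one_half_pos.le one_half_lt_one.le).const_mul
      one_half_pos.le).congr fun p hp ↦ by
        simp only [hlap p hp, mul_half_mul_div_sqrt_mul]
  have hanti : AntitoneOn z (Ioi 0) := hz.antitoneOn_of_isBernsteinOn hzc hbern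
  have hlim : Tendsto (laplaceTransform z) (𝓝[>] 0) atTop :=
    (tendsto_Kreal_div_sqrt_atTop hμ hμ₀ hμ_pos).congr'
      (eventually_mem_nhdsWithin.mono fun p hp ↦ (hlap p hp).symm)
  exact fun T hT ↦ ⟨z T, hz.pos_of_antitoneOn_of_tendsto_atTop hanti hlim hT,
    fun t ht htT ↦ hanti ht hT htT⟩

end Kernel

theorem fundamental_solution_lower_bound_at_zero (μ μ₁ : ℝ → ℝ) (ν ρ : ℝ)
    (hC2 : ContDiffOn ℝ 2 μ (Set.Icc 0 1))
    (hν : 0 ≤ ν) (hρ : 0 < ρ)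
    (hμ₁c : ContinuousOn μ₁ (Set.Icc 0 1))
    (hμform : ∀ α ∈ Set.Icc (0:ℝ) 1, μ α = α ^ ν * μ₁ α)
    (hμ₁low : ∀ α ∈ Set.Icc (0:ℝ) 1, ρ ≤ μ₁ α)
    (Z : ℝ → ℝ → ℝ)
    (hZc : ∀ x : ℝ, ContinuousOn (fun t => Z t x) (Set.Ioi 0))
    (hZlap : ∀ p : ℝ, 0 < p → ∀ x : ℝ,
      IntegrableOn (fun t : ℝ => Real.exp (-p * t) * Z t x) (Set.Ioi 0) ∧
      ∫ t in Set.Ioi (0:ℝ), Real.exp (-p * t) * Z t x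
        = (1 / 2) * Kreal μ p / Real.sqrt (p * Kreal μ p)
            * Real.exp (-|x| * Real.sqrt (p * Kreal μ p))) :
    ∀ T > (0:ℝ), ∃ ρ₀ > (0:ℝ), ∀ t : ℝ, 0 < t → t ≤ T → ρ₀ ≤ Z t 0 := by
  have hμ_cont : ContinuousOn μ (Icc 0 1) := hC2.continuousOn
  have hμ_pos (α : ℝ) (hα : α ∈ Ioc 0 1) : 0 < μ α := by
    have hα' : α ∈ Icc (0 : ℝ) 1 := Ioc_subset_Icc_self hα
    rw [hμform α hα']
    exact mul_pos (Real.rpow_pos_of_pos hα.1 ν) (hρ.trans_le (hμ₁low α hα'))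
  have hint_pos : 0 < ∫ α in Ioc 0 1, μ α := by
    rw [← intervalIntegral.integral_of_le zero_le_one]
    exact intervalIntegral.intervalIntegral_pos_of_pos_on
      (hμ_cont.intervalIntegrable_of_Icc zero_le_one)
      (fun α hα ↦ hμ_pos α (Ioo_subset_Ioc_self hα)) one_pos
  exact fundamental_solution_lower_bound_at_zero_general
    (hμ_cont.integrableOn_Icc.mono_set Ioc_subset_Icc_self) (fun α hα ↦ (hμ_pos α hα).le) hint_pos
    (hZc 0) (fun p hp ↦ (hZlap p hp 0).1)
    fun p hp ↦ by simpa [laplaceTransform] using (hZlap p hp 0).2
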